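/- Let κ ∈ (0,1/4) and T > 0. There is a constant C < ∞ such that the following holds. Let g: ℝ → ℝ be bounded and continuous with N_{−κ}(g) < ∞, and let v: (0,T] × ℝ → ℝ be jointly continuous with each v(s,·) bounded and sup_{s∈(0,T]} s^{1−κ} ‖v(s,·)‖_{C^{1/2+κ}} < ∞. Then for every t ∈ (0,T] the function w(t,x) := ∫_0^t (P_{t−s} ∗ (v(s,·)·g))(x) ds is well-defined, and sup_{t∈(0,T]} t^{1−κ} ‖w(t,·)‖_{C^{1/2+κ}} ≤ C N_{−κ}(g) T^{1/2−2κ} · sup_{s∈(0,T]} s^{1−κ} ‖v(s,·)‖_{C^{1/2+κ}}. -/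

import Mathlib

open MeasureTheory

/-- The Cauchy kernel `P_t(x) = t / (π (t² + x²))`. -/
noncomputable def cauchyKer (t x : ℝ) : ℝ := t / (Real.pi * (t ^ 2 + x ^ 2))

/-- A test function: `C¹`, supported in `[-1,1]`, with `sup |η| ≤ 1`. -/
def IsTestFn (η : ℝ → ℝ) : Prop :=
  ContDiff ℝ 1 η ∧ (∀ y, y ∉ Set.Icc (-1 : ℝ) 1 → η y = 0) ∧ ∀ y, |η y| ≤ 1

/-- The set whose supremum is the `C^α` distributional norm `N_α(f)`. -/
noncomputable def distSet (α : ℝ) (f : ℝ → ℝ) : Set ℝ :=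
  {r | ∃ (x l : ℝ) (η : ℝ → ℝ), 0 < l ∧ l ≤ 1 ∧ IsTestFn η ∧
    r = l ^ (-α) * |∫ y : ℝ, f y * (l⁻¹ * η (l⁻¹ * (y - x)))|}

/-- The `C^α`-Hölder norm of `f` as a distribution. -/
noncomputable def distNorm (α : ℝ) (f : ℝ → ℝ) : ℝ := sSup (distSet α f)

/-- The set whose supremum is the Hölder seminorm of `g` with exponent `γ`:
values `|g(x) - g(y)| / |x-y|^γ` over `x ≠ y` with `|x-y| ≤ 1`. -/
noncomputable def holderSet (γ : ℝ) (g : ℝ → ℝ) : Set ℝ :=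
  {r | ∃ x y : ℝ, x ≠ y ∧ |x - y| ≤ 1 ∧ r = |g x - g y| / |x - y| ^ γ}

/-- The Hölder norm `‖g‖_{C^γ} = sup |g| + sup_{0<|x-y|≤1} |g(x)-g(y)|/|x-y|^γ`. -/
noncomputable def holderNorm (γ : ℝ) (g : ℝ → ℝ) : ℝ :=
  sSup (Set.range fun x => |g x|) + sSup (holderSet γ g)

/-- Finiteness of the Hölder norm `‖g‖_{C^γ}`: `g` is bounded and its Hölder
seminorm quotient set is bounded above. -/
def HolderFinite (γ : ℝ) (g : ℝ → ℝ) : Prop :=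
  BddAbove (Set.range fun x => |g x|) ∧ BddAbove (holderSet γ g)

lemma cauchyKer_nonneg {l : ℝ} (hl : 0 < l) (z : ℝ) : 0 ≤ cauchyKer l z := by
  unfold cauchyKer; positivity

lemma cauchyKer_continuous {l : ℝ} (hl : 0 < l) : Continuous (cauchyKer l) := by
  unfold cauchyKer
  refine Continuous.div (by fun_prop) (by fun_prop) (fun x => ?_)
  positivity

lemma cauchyKer_eq {l : ℝ} (hl : 0 < l) (x : ℝ) :
    (fun w => cauchyKer l (x - w)) = ProbabilityTheory.cauchyPDFReal x l.toNNReal := by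
  ext w
  rw [ProbabilityTheory.cauchyPDFReal_def]
  unfold cauchyKer
  rw [Real.coe_toNNReal _ hl.le]
  have : l ^ 2 + (x - w) ^ 2 = (w - x) ^ 2 + l ^ 2 := by ring
  rw [this]; field_simp

lemma cauchyKer_integrable {l : ℝ} (hl : 0 < l) (x : ℝ) :
    Integrable (fun w => cauchyKer l (x - w)) := by
  rw [cauchyKer_eq hl]
  exact ProbabilityTheory.integrable_cauchyPDFReal x

lemma cauchyKer_integral {l : ℝ} (hl : 0 < l) (x : ℝ) :
    ∫ w, cauchyKer l (x - w) = 1 := by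
  rw [cauchyKer_eq hl]
  apply ProbabilityTheory.integral_cauchyPDFReal_eq_one
  exact (Real.toNNReal_pos.2 hl).ne'

lemma cauchyKer_diff {r : ℝ} (hr : 0 < r) (a b γ : ℝ) (hγ0 : 0 ≤ γ) (hγ : γ ≤ 1) :
    |cauchyKer r a - cauchyKer r b| ≤
      (|a - b| / r) ^ γ * (cauchyKer r a + cauchyKer r b) := by
  have ha := cauchyKer_nonneg hr a
  have hb := cauchyKer_nonneg hr b
  have hd : 0 ≤ |a - b| / r := by positivity
  by_cases h : 1 ≤ |a - b| / r
  · have h1 : 1 ≤ (|a - b| / r) ^ γ := Real.one_le_rpow h hγ0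
    have : |cauchyKer r a - cauchyKer r b| ≤ cauchyKer r a + cauchyKer r b := by
      rw [abs_le]; constructor <;> linarith
    nlinarith
  · push Not at h
    have h1 : |a - b| / r ≤ (|a - b| / r) ^ γ := by
      rcases hd.eq_or_lt with h0 | h0
      · rw [← h0]; positivity
      · calc _ = (|a - b| / r) ^ (1 : ℝ) := (Real.rpow_one _).symm
          _ ≤ _ := Real.rpow_le_rpow_of_exponent_ge h0 h.le hγ
    refine le_trans ?_ (mul_le_mul_of_nonneg_right h1 (by linarith))
    have e1 : cauchyKer r a - cauchyKer r b =
        (a - b) / r * (-(a + b) * r) * (r / (Real.pi * ((r ^ 2 + a ^ 2) * (r ^ 2 + b ^ 2)))) := by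
      unfold cauchyKer; field_simp; ring
    have e2 : cauchyKer r a + cauchyKer r b =
        (2 * r ^ 2 + a ^ 2 + b ^ 2) *
          (r / (Real.pi * ((r ^ 2 + a ^ 2) * (r ^ 2 + b ^ 2)))) := by
      unfold cauchyKer; field_simp; ring
    rw [e1, e2, abs_mul, abs_mul, abs_div, abs_of_pos hr, mul_assoc]
    refine mul_le_mul_of_nonneg_left ?_ hd
    rw [abs_of_nonneg (a := r / _) (by positivity)]
    refine mul_le_mul_of_nonneg_right ?_ (by positivity)
    rw [abs_le]
    constructor <;> nlinarith [sq_nonneg (r - a), sq_nonneg (r + a), sq_nonneg (r - b),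
      sq_nonneg (r + b)]

lemma morrey_eps {κ : ℝ} {g : ℝ → ℝ} (hg : Continuous g) {M : ℝ} (hM : ∀ x, |g x| ≤ M)
    (hN : BddAbove (distSet (-κ) g)) {l : ℝ} (hl : 0 < l) (hl1 : l ≤ 1) (w : ℝ)
    {ε : ℝ} (hε : 0 < ε) :
    ∫ y in Set.Icc (w - l / 2) (w + l / 2), |g y| ≤
      (1 + ε) * (distNorm (-κ) g * l ^ (1 - κ)) + ε * (1 + M) * (2 * l) := by
  let h : ℝ → ℝ := fun z => g (w + l * z) / (|g (w + l * z)| + ε)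
  have hden : ∀ z, 0 < |g (w + l * z)| + ε := fun z => by positivity
  have hh : Continuous h := by
    refine Continuous.div (by fun_prop) (by fun_prop) (fun z => (hden z).ne')
  obtain ⟨p, hp⟩ := exists_polynomial_near_of_continuousOn (-1) 1 h hh.continuousOn ε hε
  let χ : ContDiffBump (0 : ℝ) := ⟨1 / 2, 1, by norm_num, by norm_num⟩
  let η : ℝ → ℝ := fun z => χ z * (p.eval z / (1 + ε))
  have hη1 : ContDiff ℝ 1 η := by
    refine ContDiff.mul χ.contDiff (ContDiff.div_const ?_ _)
    simpa using p.contDiff_aeval (𝕜 := ℝ) (n := 1)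
  have hη2 : ∀ y, y ∉ Set.Icc (-1 : ℝ) 1 → η y = 0 := by
    intro y hy
    have : χ y = 0 := by
      apply χ.zero_of_le_dist
      rw [Real.dist_eq, sub_zero]
      by_contra hc
      push Not at hc
      exact hy (abs_le.1 hc.le)
    simp [η, this]
  have hhle : ∀ z, |h z| ≤ 1 := by
    intro z
    simp only [h]
    rw [abs_div, abs_of_pos (hden z), div_le_one (hden z)]
    linarith
  have hη3 : ∀ y, |η y| ≤ 1 := by
    intro y
    by_cases hy : y ∈ Set.Icc (-1 : ℝ) 1
    · have h1 := hp y hy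
      have h2 := hhle y
      have h3 : |p.eval y| ≤ 1 + ε := by
        rw [abs_le] at *; rw [abs_lt] at h1; constructor <;> linarith
      simp only [η]
      rw [abs_mul, abs_div, abs_of_nonneg χ.nonneg, abs_of_pos (by linarith : 0 < 1 + ε)]
      have h4 : |p.eval y| / (1 + ε) ≤ 1 := by rw [div_le_one (by linarith)]; exact h3
      exact mul_le_one₀ χ.le_one (by positivity) h4
    · simp [hη2 y hy]
  have htest : IsTestFn η := ⟨hη1, hη2, hη3⟩
  have hle : l ^ (-(-κ)) * |∫ y : ℝ, g y * (l⁻¹ * η (l⁻¹ * (y - w)))| ≤ distNorm (-κ) g :=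
    le_csSup hN ⟨w, l, η, hl, hl1, htest, rfl⟩
  have hIntg : (∫ y : ℝ, g y * (l⁻¹ * η (l⁻¹ * (y - w)))) =
      l⁻¹ * ∫ y : ℝ, g y * η (l⁻¹ * (y - w)) := by
    rw [← integral_const_mul]; congr 1; ext y; ring
  have hle2 : ∫ y : ℝ, g y * η (l⁻¹ * (y - w)) ≤ distNorm (-κ) g * l ^ (1 - κ) := by
    rw [hIntg, abs_mul, abs_of_pos (inv_pos.2 hl), neg_neg] at hle
    have hlk : 0 < l ^ κ := Real.rpow_pos_of_pos hl _
    rw [Real.rpow_sub hl, Real.rpow_one]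
    refine (le_abs_self _).trans ?_
    rw [mul_div_assoc', le_div_iff₀ hlk]
    calc _ = (l ^ κ * (l⁻¹ * |∫ y : ℝ, g y * η (l⁻¹ * (y - w))|)) * l := by field_simp
      _ ≤ _ := mul_le_mul_of_nonneg_right hle hl.le
  have hi1 : Integrable (fun y => g y * η (l⁻¹ * (y - w))) := by
    apply Continuous.integrable_of_hasCompactSupport
    · have := hη1.continuous; fun_prop
    · refine HasCompactSupport.intro (isCompact_Icc (a := w - l) (b := w + l)) ?_
      intro y hy
      rw [hη2, mul_zero]
      intro hc
      apply hy
      have e : y = w + l * (l⁻¹ * (y - w)) := by field_simp; ring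
      rw [e]
      constructor <;> nlinarith [hc.1, hc.2]
  have hi2 : Integrable ((Set.Icc (w - l) (w + l)).indicator fun _ => ε * (1 + M)) := by
    rw [integrable_indicator_iff measurableSet_Icc]
    exact integrableOn_const (by simp)
  have hM0 : 0 ≤ M := (abs_nonneg _).trans (hM 0)
  rw [← integral_indicator measurableSet_Icc]
  calc _ ≤ ∫ y, ((1 + ε) * (g y * η (l⁻¹ * (y - w))) +
        (Set.Icc (w - l) (w + l)).indicator (fun _ => ε * (1 + M)) y) := by
        refine integral_mono ?_ ((hi1.const_mul _).add hi2) ?_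
        · rw [integrable_indicator_iff measurableSet_Icc]
          exact (hg.abs.continuousOn).integrableOn_Icc
        · intro y
          set z := l⁻¹ * (y - w) with hz
          have e : y = w + l * z := by rw [hz]; field_simp; ring
          by_cases hy : z ∈ Set.Icc (-1 : ℝ) 1
          · have hy' : y ∈ Set.Icc (w - l) (w + l) := by
              rw [e]; constructor <;> nlinarith [hy.1, hy.2]
            have h1 := hp z hy
            have h2 : g y * h z ≥ |g y| - ε := by
              simp only [h]; rw [← e]
              have := hden z
              rw [← e] at this
              rw [ge_iff_le, mul_div_assoc', le_div_iff₀ this, ← abs_mul_abs_self (g y)]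
              nlinarith
            have h3 : g y * p.eval z ≥ |g y| - ε * (1 + M) := by
              have : |g y * (p.eval z - h z)| ≤ M * ε := by
                rw [abs_mul]; exact mul_le_mul (hM y) h1.le (abs_nonneg _) hM0
              have := (abs_le.1 this).1
              nlinarith
            have h4 : (1 + ε) * (g y * η z) = χ z * (g y * p.eval z) := by
              simp only [η]; field_simp
            simp only [Set.indicator_of_mem hy']
            rw [h4]
            have c0 : 0 ≤ χ z := χ.nonneg
            have c1 : χ z ≤ 1 := χ.le_one
            have h5 : χ z * |g y| ≤ χ z * (g y * p.eval z) + ε * (1 + M) := by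
              have : 0 ≤ ε * (1 + M) := by positivity
              nlinarith
            refine le_trans ?_ h5
            by_cases hyy : y ∈ Set.Icc (w - l / 2) (w + l / 2)
            · have : χ z = 1 := by
                apply χ.one_of_mem_closedBall
                rw [Metric.mem_closedBall, Real.dist_eq, sub_zero, abs_le]
                change -(1/2) ≤ z ∧ z ≤ 1/2
                rw [e] at hyy
                constructor
                · by_contra hc; push Not at hc; nlinarith [hyy.1]
                · by_contra hc; push Not at hc; nlinarith [hyy.2]
              rw [Set.indicator_of_mem hyy, this, one_mul]
            · rw [Set.indicator_of_notMem hyy]; positivity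
          · have hyy : y ∉ Set.Icc (w - l / 2) (w + l / 2) := by
              intro hc
              apply hy
              rw [e] at hc
              constructor
              · by_contra hc'; push Not at hc'; nlinarith [hc.1]
              · by_contra hc'; push Not at hc'; nlinarith [hc.2]
            rw [Set.indicator_of_notMem hyy]
            have h6 : 0 ≤ (Set.Icc (w - l) (w + l)).indicator (fun _ => ε * (1 + M)) y := by
              apply Set.indicator_nonneg
              intro _ _; positivity
            have h7 := hη2 z hy
            rw [hz] at h7
            simpa [h7] using h6
    _ ≤ _ := by
        rw [integral_add (hi1.const_mul _) hi2, integral_const_mul,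
          integral_indicator measurableSet_Icc]
        refine add_le_add (mul_le_mul_of_nonneg_left hle2 (by linarith)) (le_of_eq ?_)
        rw [setIntegral_const, measureReal_def, Real.volume_Icc,
          ENNReal.toReal_ofReal (by linarith), smul_eq_mul]
        ring

lemma morrey {κ : ℝ} {g : ℝ → ℝ} (hg : Continuous g) {M : ℝ} (hM : ∀ x, |g x| ≤ M)
    (hN : BddAbove (distSet (-κ) g)) {l : ℝ} (hl : 0 < l) (hl1 : l ≤ 1) (w : ℝ) :
    ∫ y in Set.Icc (w - l / 2) (w + l / 2), |g y| ≤ distNorm (-κ) g * l ^ (1 - κ) := by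
  have hlim : Filter.Tendsto (fun ε : ℝ =>
      (1 + ε) * (distNorm (-κ) g * l ^ (1 - κ)) + ε * (1 + M) * (2 * l))
      (nhdsWithin 0 (Set.Ioi 0)) (nhds (distNorm (-κ) g * l ^ (1 - κ))) := by
    have : Continuous (fun ε : ℝ =>
      (1 + ε) * (distNorm (-κ) g * l ^ (1 - κ)) + ε * (1 + M) * (2 * l)) := by fun_prop
    have h := (this.tendsto 0).mono_left (nhdsWithin_le_nhds (s := Set.Ioi 0))
    simpa using h
  refine ge_of_tendsto hlim ?_
  filter_upwards [self_mem_nhdsWithin] with ε hε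
  exact morrey_eps hg hM hN hl hl1 w hε

lemma distNorm_nonneg (α : ℝ) (g : ℝ → ℝ) : 0 ≤ distNorm α g := by
  apply Real.sSup_nonneg
  rintro r ⟨x, l, η, hl, -, -, rfl⟩
  positivity

lemma cauchyKer_avg {l : ℝ} (hl : 0 < l) (x y w : ℝ) (h : w ∈ Set.Icc (y - l / 2) (y + l / 2)) :
    cauchyKer l (x - y) ≤ 3 * cauchyKer l (x - w) := by
  unfold cauchyKer
  rw [mul_div_assoc', div_le_div_iff₀ (by positivity) (by positivity)]
  have h1 : (y - w) ^ 2 ≤ l ^ 2 := by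
    apply sq_le_sq' <;> linarith [h.1, h.2]
  have : l ^ 2 + (x - w) ^ 2 ≤ 3 * (l ^ 2 + (x - y) ^ 2) := by
    nlinarith [sq_nonneg ((x - y) - (y - w))]
  have hp := Real.pi_pos
  calc _ = (l * Real.pi) * (l ^ 2 + (x - w) ^ 2) := by ring
    _ ≤ (l * Real.pi) * (3 * (l ^ 2 + (x - y) ^ 2)) :=
      mul_le_mul_of_nonneg_left this (by positivity)
    _ = _ := by ring

lemma conv_lintegral {κ : ℝ} {g : ℝ → ℝ} (hg : Continuous g) {M : ℝ} (hM : ∀ x, |g x| ≤ M)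
    (hN : BddAbove (distSet (-κ) g)) {l : ℝ} (hl : 0 < l) (hl1 : l ≤ 1) (x : ℝ) :
    ∫⁻ y, ENNReal.ofReal (cauchyKer l (x - y) * |g y|) ≤
      ENNReal.ofReal (3 * distNorm (-κ) g * l ^ (-κ)) := by
  have hPc := cauchyKer_continuous hl
  have hN0 := distNorm_nonneg (-κ) g
  have hK0 := fun z => cauchyKer_nonneg hl z
  let S : Set (ℝ × ℝ) := {p | |p.1 - p.2| ≤ l / 2}
  have hS : MeasurableSet S := by
    apply IsClosed.measurableSet
    exact isClosed_le (by fun_prop) (by fun_prop)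
  let F : ℝ × ℝ → ENNReal := S.indicator
    (fun p => ENNReal.ofReal (3 * cauchyKer l (x - p.2) * l⁻¹ * |g p.1|))
  have hF : Measurable F := by
    apply Measurable.indicator _ hS
    exact (Continuous.measurable (by fun_prop)).ennreal_ofReal
  have hSw : ∀ y w, (y, w) ∈ S ↔ w ∈ Set.Icc (y - l / 2) (y + l / 2) := by
    intro y w
    simp only [S, Set.mem_ofPred_eq, abs_le, Set.mem_Icc]
    constructor <;> rintro ⟨h1, h2⟩ <;> constructor <;> linarith
  have hSy : ∀ y w, (y, w) ∈ S ↔ y ∈ Set.Icc (w - l / 2) (w + l / 2) := by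
    intro y w
    simp only [S, Set.mem_ofPred_eq, abs_le, Set.mem_Icc]
    constructor <;> rintro ⟨h1, h2⟩ <;> constructor <;> linarith
  calc _ ≤ ∫⁻ y, ∫⁻ w, F (y, w) := by
        apply lintegral_mono
        intro y
        calc ENNReal.ofReal (cauchyKer l (x - y) * |g y|)
            = ∫⁻ w in Set.Icc (y - l / 2) (y + l / 2),
                ENNReal.ofReal (cauchyKer l (x - y) * l⁻¹ * |g y|) := by
              rw [setLIntegral_const, Real.volume_Icc, ← ENNReal.ofReal_mul
                (mul_nonneg (mul_nonneg (hK0 _) (by positivity)) (abs_nonneg _))]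
              congr 1
              field_simp; ring
          _ = ∫⁻ w, (Set.Icc (y - l / 2) (y + l / 2)).indicator
                (fun _ => ENNReal.ofReal (cauchyKer l (x - y) * l⁻¹ * |g y|)) w := by
              rw [lintegral_indicator measurableSet_Icc]
          _ ≤ _ := by
              apply lintegral_mono
              intro w
              by_cases hw : w ∈ Set.Icc (y - l / 2) (y + l / 2)
              · simp only [F]
                rw [Set.indicator_of_mem hw, Set.indicator_of_mem ((hSw y w).2 hw)]
                apply ENNReal.ofReal_le_ofReal
                have := cauchyKer_avg hl x y w hw
                gcongr
              · simp only
                rw [Set.indicator_of_notMem hw]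
                exact zero_le
    _ = ∫⁻ w, ∫⁻ y, F (y, w) := lintegral_lintegral_swap (f := fun y w => F (y, w)) hF.aemeasurable
    _ ≤ ∫⁻ w, ENNReal.ofReal (3 * distNorm (-κ) g * l ^ (-κ) * cauchyKer l (x - w)) := by
        apply lintegral_mono
        intro w
        calc ∫⁻ y, F (y, w) = ∫⁻ y, (Set.Icc (w - l / 2) (w + l / 2)).indicator
              (fun y => ENNReal.ofReal (3 * cauchyKer l (x - w) * l⁻¹ * |g y|)) y := by
              congr 1; ext y
              simp only [F, Set.indicator_apply, hSy]
          _ = ∫⁻ y in Set.Icc (w - l / 2) (w + l / 2),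
                ENNReal.ofReal (3 * cauchyKer l (x - w) * l⁻¹ * |g y|) :=
              lintegral_indicator measurableSet_Icc _
          _ = ENNReal.ofReal (∫ y in Set.Icc (w - l / 2) (w + l / 2),
                3 * cauchyKer l (x - w) * l⁻¹ * |g y|) := by
              rw [ofReal_integral_eq_lintegral_ofReal]
              · exact ((continuous_const.mul hg.abs).continuousOn).integrableOn_Icc
              · refine Filter.Eventually.of_forall (fun y => ?_)
                exact mul_nonneg (mul_nonneg (mul_nonneg (by norm_num) (hK0 _))
                  (by positivity)) (abs_nonneg _)
          _ ≤ _ := by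
              apply ENNReal.ofReal_le_ofReal
              rw [integral_const_mul]
              have hm := morrey hg hM hN hl hl1 w
              have e : distNorm (-κ) g * l ^ (1 - κ) = l * (distNorm (-κ) g * l ^ (-κ)) := by
                rw [sub_eq_add_neg, Real.rpow_add hl, Real.rpow_one]; ring
              rw [e] at hm
              calc _ ≤ 3 * cauchyKer l (x - w) * l⁻¹ * (l * (distNorm (-κ) g * l ^ (-κ))) :=
                    mul_le_mul_of_nonneg_left hm (mul_nonneg (mul_nonneg (by norm_num) (hK0 _))
                  (by positivity))
                _ = _ := by field_simp
    _ = _ := by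
        rw [← ofReal_integral_eq_lintegral_ofReal, integral_const_mul, cauchyKer_integral hl,
          mul_one]
        · exact (cauchyKer_integrable hl x).const_mul _
        · refine Filter.Eventually.of_forall (fun y => ?_)
          exact mul_nonneg (by positivity) (hK0 _)

lemma conv_integrable {g : ℝ → ℝ} (hg : Continuous g) {M : ℝ} (hM : ∀ x, |g x| ≤ M)
    {l : ℝ} (hl : 0 < l) (x : ℝ) : Integrable (fun y => cauchyKer l (x - y) * g y) := by
  refine (cauchyKer_integrable hl x).mul_bdd (c := M) hg.aestronglyMeasurable ?_
  exact Filter.Eventually.of_forall hM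

lemma conv_bound {κ : ℝ} {g : ℝ → ℝ} (hg : Continuous g) {M : ℝ} (hM : ∀ x, |g x| ≤ M)
    (hN : BddAbove (distSet (-κ) g)) {l : ℝ} (hl : 0 < l) (hl1 : l ≤ 1) (x : ℝ) :
    ∫ y, cauchyKer l (x - y) * |g y| ≤ 3 * distNorm (-κ) g * l ^ (-κ) := by
  have hN0 := distNorm_nonneg (-κ) g
  have h := conv_lintegral hg hM hN hl hl1 x
  rw [← ofReal_integral_eq_lintegral_ofReal
    (conv_integrable hg.abs (M := M) (by simpa using hM) hl x)
    (Filter.Eventually.of_forall fun y => mul_nonneg (cauchyKer_nonneg hl _) (abs_nonneg _))] at h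
  exact (ENNReal.ofReal_le_ofReal_iff (by positivity)).1 h

lemma conv_bound' {κ T : ℝ} {g : ℝ → ℝ} (hg : Continuous g) {M : ℝ} (hM : ∀ x, |g x| ≤ M)
    (hN : BddAbove (distSet (-κ) g)) {r : ℝ} (hr : 0 < r) (hrT : r ≤ T) (x : ℝ) :
    ∫ y, cauchyKer r (x - y) * |g y| ≤
      3 * (max 1 T * (max 1 T) ^ κ) * distNorm (-κ) g * r ^ (-κ) := by
  set m := max 1 T with hm
  have hm1 : 1 ≤ m := le_max_left _ _
  have hm0 : 0 < m := by linarith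
  have hTm : T ≤ m := le_max_right _ _
  have hl : 0 < r / m := by positivity
  have hl1 : r / m ≤ 1 := by rw [div_le_one hm0]; linarith
  have hlr : r / m ≤ r := div_le_self hr.le hm1
  have key : ∀ z, cauchyKer r z ≤ m * cauchyKer (r / m) z := by
    intro z
    unfold cauchyKer
    rw [← mul_div_assoc, mul_div_cancel₀ _ hm0.ne']
    gcongr
  have hMa : ∀ x, |(|g x|)| ≤ M := by simpa using hM
  calc _ ≤ ∫ y, m * (cauchyKer (r / m) (x - y) * |g y|) := by
        refine integral_mono (conv_integrable hg.abs hMa hr x)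
          ((conv_integrable hg.abs hMa hl x).const_mul _) (fun y => ?_)
        simp only
        rw [← mul_assoc]
        exact mul_le_mul_of_nonneg_right (key _) (abs_nonneg _)
    _ ≤ m * (3 * distNorm (-κ) g * (r / m) ^ (-κ)) := by
        rw [integral_const_mul]
        exact mul_le_mul_of_nonneg_left (conv_bound hg hM hN hl hl1 x) hm0.le
    _ = _ := by
        rw [Real.div_rpow hr.le hm0.le, Real.rpow_neg hm0.le]
        field_simp

lemma time_bound {a b : ℝ} (ha0 : 0 ≤ a) (ha : a < 1) (hb0 : 0 ≤ b) (hb : b < 1)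
    {t : ℝ} (ht : 0 < t) :
    IntegrableOn (fun s => (t - s) ^ (-a) * s ^ (-b)) (Set.Ioo 0 t) ∧
    ∫ s in Set.Ioo 0 t, (t - s) ^ (-a) * s ^ (-b) ≤
      (2 ^ a / (1 - b) + 2 ^ b / (1 - a)) * t ^ (1 - a - b) := by
  have h1 : IntervalIntegrable (fun s : ℝ => s ^ (-b)) volume 0 t :=
    intervalIntegral.intervalIntegrable_rpow' (by linarith)
  have h2 : IntervalIntegrable (fun s : ℝ => (t - s) ^ (-a)) volume 0 t := by
    have := (intervalIntegral.intervalIntegrable_rpow' (a := 0) (b := t)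
      (r := -a) (by linarith)).comp_sub_left t
    simpa using this.symm
  have i1 : ∫ s in (0 : ℝ)..t, s ^ (-b) = t ^ (1 - b) / (1 - b) := by
    rw [integral_rpow (Or.inl (by linarith)), Real.zero_rpow (by linarith)]
    rw [sub_zero, neg_add_eq_sub]
  have i2 : ∫ s in (0 : ℝ)..t, (t - s) ^ (-a) = t ^ (1 - a) / (1 - a) := by
    rw [intervalIntegral.integral_comp_sub_left (fun s => s ^ (-a)) t, sub_self, sub_zero,
      integral_rpow (Or.inl (by linarith)), Real.zero_rpow (by linarith)]
    rw [sub_zero, neg_add_eq_sub]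
  have hE := (h1.const_mul ((t / 2) ^ (-a))).add (h2.const_mul ((t / 2) ^ (-b)))
  have hEi : IntegrableOn (fun s => (t / 2) ^ (-a) * s ^ (-b) + (t / 2) ^ (-b) * (t - s) ^ (-a))
      (Set.Ioo 0 t) := by
    rw [intervalIntegrable_iff_integrableOn_Ioo_of_le ht.le] at hE
    exact hE
  have hdom : ∀ s ∈ Set.Ioo 0 t, (t - s) ^ (-a) * s ^ (-b) ≤
      (t / 2) ^ (-a) * s ^ (-b) + (t / 2) ^ (-b) * (t - s) ^ (-a) := by
    intro s hs
    have hs0 : 0 < s := hs.1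
    have hts : 0 < t - s := by linarith [hs.2]
    have ht2 : 0 < t / 2 := by linarith
    by_cases h : s ≤ t / 2
    · have : (t - s) ^ (-a) ≤ (t / 2) ^ (-a) :=
        Real.rpow_le_rpow_of_nonpos ht2 (by linarith) (by linarith)
      have h3 : 0 ≤ (t / 2) ^ (-b) * (t - s) ^ (-a) := by positivity
      have h4 := mul_le_mul_of_nonneg_right this (Real.rpow_nonneg hs0.le (-b))
      linarith
    · have : s ^ (-b) ≤ (t / 2) ^ (-b) :=
        Real.rpow_le_rpow_of_nonpos ht2 (by linarith) (by linarith)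
      have h3 : 0 ≤ (t / 2) ^ (-a) * s ^ (-b) := by positivity
      have h4 := mul_le_mul_of_nonneg_right this (Real.rpow_nonneg hts.le (-a))
      linarith
  have hIntg : IntegrableOn (fun s => (t - s) ^ (-a) * s ^ (-b)) (Set.Ioo 0 t) := by
    refine Integrable.mono' hEi (by fun_prop) ?_
    filter_upwards [ae_restrict_mem measurableSet_Ioo] with s hs
    have hs0 : 0 < s := hs.1
    have hts : 0 < t - s := by linarith [hs.2]
    rw [Real.norm_of_nonneg (by positivity)]
    exact hdom s hs
  refine ⟨hIntg, (setIntegral_mono_on hIntg hEi measurableSet_Ioo hdom).trans (le_of_eq ?_)⟩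
  rw [← integral_Ioc_eq_integral_Ioo, ← intervalIntegral.integral_of_le ht.le,
    intervalIntegral.integral_add (h1.const_mul _) (h2.const_mul _),
    intervalIntegral.integral_const_mul, intervalIntegral.integral_const_mul, i1, i2,
    Real.div_rpow ht.le (by norm_num), Real.div_rpow ht.le (by norm_num),
    Real.rpow_neg (by norm_num : (0:ℝ) ≤ 2), Real.rpow_neg (by norm_num : (0:ℝ) ≤ 2)]
  have e1 : t ^ (1 - a - b) = t ^ (-a) * t ^ (1 - b) := by rw [← Real.rpow_add ht]; ring_nf
  have e2 : t ^ (1 - a - b) = t ^ (-b) * t ^ (1 - a) := by rw [← Real.rpow_add ht]; ring_nf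
  rw [add_mul]
  nth_rewrite 1 [e1]
  rw [e2]
  have : 1 - a ≠ 0 := by linarith
  have : 1 - b ≠ 0 := by linarith
  field_simp

lemma inner_int {g u : ℝ → ℝ} (hg : Continuous g) {M : ℝ} (hM : ∀ x, |g x| ≤ M)
    (hu : Continuous u) {U : ℝ} (hU : ∀ x, |u x| ≤ U) {r : ℝ} (hr : 0 < r) (x : ℝ) :
    Integrable (fun y => cauchyKer r (x - y) * (u y * g y)) := by
  refine conv_integrable (hu.mul hg) (M := U * M) (fun y => ?_) hr x
  rw [Pi.mul_apply, abs_mul]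
  exact mul_le_mul (hU y) (hM y) (abs_nonneg _) ((abs_nonneg _).trans (hU y))

lemma inner_bound {κ T : ℝ} {g u : ℝ → ℝ} (hg : Continuous g) {M : ℝ} (hM : ∀ x, |g x| ≤ M)
    (hN : BddAbove (distSet (-κ) g)) (hu : Continuous u) {U : ℝ} (hU : ∀ x, |u x| ≤ U)
    {r : ℝ} (hr : 0 < r) (hrT : r ≤ T) (x : ℝ) :
    |∫ y, cauchyKer r (x - y) * (u y * g y)| ≤
      U * (3 * (max 1 T * (max 1 T) ^ κ) * distNorm (-κ) g * r ^ (-κ)) := by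
  have hU0 : 0 ≤ U := (abs_nonneg _).trans (hU 0)
  have hMa : ∀ x, |(|g x|)| ≤ M := by simpa using hM
  calc _ ≤ ∫ y, |cauchyKer r (x - y) * (u y * g y)| := abs_integral_le_integral_abs
    _ ≤ ∫ y, U * (cauchyKer r (x - y) * |g y|) := by
        refine integral_mono (inner_int hg hM hu hU hr x).abs
          ((conv_integrable hg.abs hMa hr x).const_mul _) (fun y => ?_)
        simp only
        have h0 := cauchyKer_nonneg hr (x - y)
        rw [abs_mul, abs_mul, abs_of_nonneg h0]
        have := mul_le_mul_of_nonneg_right (hU y) (mul_nonneg h0 (abs_nonneg (g y)))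
        linarith
    _ ≤ _ := by
        rw [integral_const_mul]
        exact mul_le_mul_of_nonneg_left (conv_bound' hg hM hN hr hrT x) hU0

lemma inner_diff {κ T γ : ℝ} {g u : ℝ → ℝ} (hγ0 : 0 ≤ γ) (hγ1 : γ ≤ 1)
    (hg : Continuous g) {M : ℝ} (hM : ∀ x, |g x| ≤ M)
    (hN : BddAbove (distSet (-κ) g)) (hu : Continuous u) {U : ℝ} (hU : ∀ x, |u x| ≤ U)
    {r : ℝ} (hr : 0 < r) (hrT : r ≤ T) (x z : ℝ) :
    |(∫ y, cauchyKer r (x - y) * (u y * g y)) - ∫ y, cauchyKer r (z - y) * (u y * g y)| ≤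
      U * (|x - z| / r) ^ γ *
        (2 * (3 * (max 1 T * (max 1 T) ^ κ) * distNorm (-κ) g * r ^ (-κ))) := by
  have hU0 : 0 ≤ U := (abs_nonneg _).trans (hU 0)
  have hMa : ∀ x, |(|g x|)| ≤ M := by simpa using hM
  have hix := conv_integrable hg.abs hMa hr x
  have hiz := conv_integrable hg.abs hMa hr z
  have hs := (inner_int hg hM hu hU hr x).sub (inner_int hg hM hu hU hr z)
  rw [← integral_sub (inner_int hg hM hu hU hr x) (inner_int hg hM hu hU hr z)]
  have hc : 0 ≤ U * (|x - z| / r) ^ γ := by positivity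
  calc _ ≤ ∫ y, |cauchyKer r (x - y) * (u y * g y) - cauchyKer r (z - y) * (u y * g y)| :=
        abs_integral_le_integral_abs
    _ ≤ ∫ y, (U * (|x - z| / r) ^ γ) *
          (cauchyKer r (x - y) * |g y| + cauchyKer r (z - y) * |g y|) := by
        refine integral_mono hs.abs ((hix.add hiz).const_mul _) (fun y => ?_)
        simp only
        have h0 := cauchyKer_diff hr (x - y) (z - y) γ hγ0 hγ1
        rw [show x - y - (z - y) = x - z by ring] at h0
        rw [← sub_mul, abs_mul, abs_mul]
        calc _ ≤ ((|x - z| / r) ^ γ * (cauchyKer r (x - y) + cauchyKer r (z - y))) *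
              (U * |g y|) := by
              have := hU y
              have := (abs_nonneg _).trans h0
              gcongr
          _ = _ := by ring
    _ ≤ _ := by
        rw [integral_const_mul, integral_add hix hiz]
        refine mul_le_mul_of_nonneg_left ?_ hc
        have := conv_bound' hg hM hN hr hrT x
        have := conv_bound' hg hM hN hr hrT z
        linarith

lemma inner_meas {g : ℝ → ℝ} (hg : Continuous g) {v : ℝ → ℝ → ℝ} {t T : ℝ} (htT : t ≤ T)
    (hv : ContinuousOn (fun p : ℝ × ℝ => v p.1 p.2) (Set.Ioc 0 T ×ˢ Set.univ)) (x : ℝ) :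
    AEStronglyMeasurable (fun s => ∫ y : ℝ, cauchyKer (t - s) (x - y) * (v s y * g y))
      (volume.restrict (Set.Ioo 0 t)) := by
  have hsub : (Set.Ioo 0 t ×ˢ (Set.univ : Set ℝ)) ⊆ Set.Ioc 0 T ×ˢ Set.univ :=
    Set.prod_mono (fun s hs => ⟨hs.1, hs.2.le.trans htT⟩) le_rfl
  have hc : ContinuousOn (fun p : ℝ × ℝ => cauchyKer (t - p.1) (x - p.2) * (v p.1 p.2 * g p.2))
      (Set.Ioo 0 t ×ˢ Set.univ) := by
    refine ContinuousOn.mul ?_ ((hv.mono hsub).mul (by fun_prop))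
    unfold cauchyKer
    refine ContinuousOn.div (by fun_prop) (by fun_prop) ?_
    rintro ⟨s, y⟩ ⟨hs, -⟩
    have : 0 < t - s := by linarith [hs.2]
    simp only
    positivity
  have hm : AEStronglyMeasurable
      (fun p : ℝ × ℝ => cauchyKer (t - p.1) (x - p.2) * (v p.1 p.2 * g p.2))
      ((volume.restrict (Set.Ioo 0 t)).prod volume) := by
    have h := hc.aestronglyMeasurable (μ := (volume : Measure ℝ).prod volume)
      (measurableSet_Ioo.prod MeasurableSet.univ)
    rw [← Measure.prod_restrict, Measure.restrict_univ] at h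
    exact h
  have hfin := hm.integral_prod_right'
  exact hfin

/-- Boundedness of the Duhamel-type operator `v ↦ ∫_0^t P_{t-s} ∗ (v(s,·)·g) ds` in
the weighted space `X_T^κ(C^(1/2+κ))`: for `κ ∈ (0,1/4)` and `T > 0` there is
`C < ∞` such that for `g` bounded continuous with `N_{-κ}(g) < ∞` and `v` jointly
continuous on `(0,T] × ℝ` with `sup_{s ∈ (0,T]} s^(1-κ) ‖v(s,·)‖_{C^(1/2+κ)} < ∞`,
the function `w(t,x) = ∫_0^t (P_{t-s} ∗ (v(s,·)·g))(x) ds` is well-defined and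
`sup_{t∈(0,T]} t^(1-κ) ‖w(t,·)‖_{C^(1/2+κ)}
  ≤ C N_{-κ}(g) T^(1/2-2κ) sup_{s∈(0,T]} s^(1-κ) ‖v(s,·)‖_{C^(1/2+κ)}`
(the `C^(1/2+κ)` norm of `w(t,·)` being expressed pointwise). -/
theorem duhamel_operator_bound (κ T : ℝ) (hκ : κ ∈ Set.Ioo (0 : ℝ) (1 / 4))
    (hT : 0 < T) :
    ∃ C : ℝ, ∀ g : ℝ → ℝ, Continuous g → (∃ M, ∀ x, |g x| ≤ M) →
      BddAbove (distSet (-κ) g) →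
      ∀ v : ℝ → ℝ → ℝ,
        ContinuousOn (fun p : ℝ × ℝ => v p.1 p.2) (Set.Ioc 0 T ×ˢ Set.univ) →
        (∀ s : ℝ, s ∈ Set.Ioc (0 : ℝ) T →
          Continuous (v s) ∧ HolderFinite (1 / 2 + κ) (v s)) →
        BddAbove {r : ℝ | ∃ s ∈ Set.Ioc (0 : ℝ) T,
          r = s ^ (1 - κ) * holderNorm (1 / 2 + κ) (v s)} →
        ∀ t : ℝ, t ∈ Set.Ioc (0 : ℝ) T →
          (∀ x : ℝ,
            (∀ s ∈ Set.Ioo (0 : ℝ) t,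
              Integrable (fun y => cauchyKer (t - s) (x - y) * (v s y * g y))) ∧
            IntegrableOn
              (fun s => ∫ y : ℝ, cauchyKer (t - s) (x - y) * (v s y * g y))
              (Set.Ioo 0 t)) ∧
          ∀ x x' y' : ℝ, x' ≠ y' → |x' - y'| ≤ 1 →
            t ^ (1 - κ) *
                (|∫ s in Set.Ioo (0 : ℝ) t,
                    ∫ y : ℝ, cauchyKer (t - s) (x - y) * (v s y * g y)| +
                  |(∫ s in Set.Ioo (0 : ℝ) t,
                      ∫ y : ℝ, cauchyKer (t - s) (x' - y) * (v s y * g y)) -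
                    ∫ s in Set.Ioo (0 : ℝ) t,
                      ∫ y : ℝ, cauchyKer (t - s) (y' - y) * (v s y * g y)| /
                    |x' - y'| ^ (1 / 2 + κ))
              ≤ C * distNorm (-κ) g * T ^ (1 / 2 - 2 * κ) *
                  sSup {r : ℝ | ∃ s ∈ Set.Ioc (0 : ℝ) T,
                    r = s ^ (1 - κ) * holderNorm (1 / 2 + κ) (v s)} := by
  obtain ⟨hκ0, hκ1⟩ := hκ
  have hγ0 : 0 ≤ 1 / 2 + κ := by linarith
  have hγ1 : 1 / 2 + κ ≤ 1 := by linarith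
  set A : ℝ := 3 * (max 1 T * (max 1 T) ^ κ) with hA
  have hA0 : 0 ≤ A := by positivity
  set a : ℝ := 1 / 2 + 2 * κ with ha
  set b : ℝ := 1 - κ with hb
  set K : ℝ := 2 ^ a / (1 - b) + 2 ^ b / (1 - a) with hK
  refine ⟨A * (T ^ (1 / 2 + κ) + 2) * K, ?_⟩
  intro g hg ⟨M, hM⟩ hN v hvc hv hV t ht
  set V : ℝ := sSup {r : ℝ | ∃ s ∈ Set.Ioc (0 : ℝ) T,
          r = s ^ b * holderNorm (1 / 2 + κ) (v s)} with hVdef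
  set N : ℝ := distNorm (-κ) g with hNdef
  have hN0 : 0 ≤ N := distNorm_nonneg _ _
  obtain ⟨ht0, htT⟩ := ht
  obtain ⟨hDi, hDb⟩ := time_bound (a := a) (b := b) (by linarith) (by linarith)
    (by linarith) (by linarith) ht0
  have hU : ∀ s ∈ Set.Ioo 0 t, ∀ y, |v s y| ≤ s ^ (-b) * V := by
    intro s hs y
    have hsT : s ∈ Set.Ioc 0 T := ⟨hs.1, hs.2.le.trans htT⟩
    obtain ⟨-, hf1, hf2⟩ := hv s hsT
    have h1 : |v s y| ≤ holderNorm (1 / 2 + κ) (v s) := by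
      have h2 : |v s y| ≤ sSup (Set.range fun x => |v s x|) := le_csSup hf1 ⟨y, rfl⟩
      have h3 : 0 ≤ sSup (holderSet (1 / 2 + κ) (v s)) := by
        apply Real.sSup_nonneg
        rintro r ⟨x, y, -, -, rfl⟩
        positivity
      unfold holderNorm
      linarith
    have h4 : s ^ b * holderNorm (1 / 2 + κ) (v s) ≤ V := le_csSup hV ⟨s, hsT, rfl⟩
    have hsb : 0 < s ^ b := Real.rpow_pos_of_pos hs.1 _
    rw [Real.rpow_neg hs.1.le, inv_mul_eq_div, le_div_iff₀ hsb]
    nlinarith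
  have hV0 : 0 ≤ V := by
    apply Real.sSup_nonneg
    rintro r ⟨s, hs, rfl⟩
    have h2 : 0 ≤ sSup (Set.range fun x => |v s x|) := by
      apply Real.sSup_nonneg
      rintro r ⟨x, rfl⟩
      positivity
    have h3 : 0 ≤ sSup (holderSet (1 / 2 + κ) (v s)) := by
      apply Real.sSup_nonneg
      rintro r ⟨x, y, -, -, rfl⟩
      positivity
    have hsb : 0 < s ^ b := Real.rpow_pos_of_pos hs.1 _
    unfold holderNorm
    positivity
  have hcont : ∀ s ∈ Set.Ioo 0 t, Continuous (v s) := fun s hs =>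
    (hv s ⟨hs.1, hs.2.le.trans htT⟩).1
  have hb1 : ∀ x, ∀ s ∈ Set.Ioo 0 t,
      |∫ y : ℝ, cauchyKer (t - s) (x - y) * (v s y * g y)| ≤
        (A * N * V * T ^ (1 / 2 + κ)) * ((t - s) ^ (-a) * s ^ (-b)) := by
    intro x s hs
    have hr : 0 < t - s := by linarith [hs.2]
    have hrT : t - s ≤ T := by linarith [hs.1]
    have h := inner_bound hg hM hN (hcont s hs) (hU s hs) hr hrT x
    have h1 : (t - s) ^ (-κ) ≤ T ^ (1 / 2 + κ) * (t - s) ^ (-a) := by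
      have e : (t - s) ^ (-κ) = (t - s) ^ (1 / 2 + κ) * (t - s) ^ (-a) := by
        rw [← Real.rpow_add hr]; congr 1; rw [ha]; ring
      rw [e]
      gcongr
    have hsb : 0 < s ^ (-b) := Real.rpow_pos_of_pos hs.1 _
    calc _ ≤ s ^ (-b) * V * (A * N * (t - s) ^ (-κ)) := h
      _ ≤ s ^ (-b) * V * (A * N * (T ^ (1 / 2 + κ) * (t - s) ^ (-a))) := by gcongr
      _ = _ := by ring
  have hb2 : ∀ x z, ∀ s ∈ Set.Ioo 0 t,
      |(∫ y : ℝ, cauchyKer (t - s) (x - y) * (v s y * g y)) -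
        ∫ y : ℝ, cauchyKer (t - s) (z - y) * (v s y * g y)| ≤
        (A * N * V * 2 * |x - z| ^ (1 / 2 + κ)) * ((t - s) ^ (-a) * s ^ (-b)) := by
    intro x z s hs
    have hr : 0 < t - s := by linarith [hs.2]
    have hrT : t - s ≤ T := by linarith [hs.1]
    have h := inner_diff hγ0 hγ1 hg hM hN (hcont s hs) (hU s hs) hr hrT x z
    have e : (t - s) ^ (-a) = (t - s) ^ (-(1 / 2 + κ)) * (t - s) ^ (-κ) := by
      rw [← Real.rpow_add hr]; congr 1; rw [ha]; ring
    refine h.trans (le_of_eq ?_)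
    rw [e, Real.div_rpow (abs_nonneg _) hr.le, Real.rpow_neg hr.le (1 / 2 + κ)]
    ring
  have hInt : ∀ x, IntegrableOn
      (fun s => ∫ y : ℝ, cauchyKer (t - s) (x - y) * (v s y * g y)) (Set.Ioo 0 t) := by
    intro x
    refine Integrable.mono' (hDi.const_mul (A * N * V * T ^ (1 / 2 + κ)))
      (inner_meas hg htT hvc x) ?_
    filter_upwards [ae_restrict_mem measurableSet_Ioo] with s hs
    exact hb1 x s hs
  refine ⟨fun x => ⟨fun s hs => ?_, hInt x⟩, ?_⟩
  · exact inner_int hg hM (hcont s hs) (hU s hs) (by linarith [hs.2]) x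
  intro x x' y' hne _
  have hd : 0 < |x' - y'| ^ (1 / 2 + κ) := Real.rpow_pos_of_pos (abs_pos.2 (sub_ne_zero.2 hne)) _
  have f1 : |∫ s in Set.Ioo (0 : ℝ) t, ∫ y : ℝ, cauchyKer (t - s) (x - y) * (v s y * g y)| ≤
      (A * N * V * T ^ (1 / 2 + κ)) * (K * t ^ (1 - a - b)) := by
    calc _ ≤ ∫ s in Set.Ioo (0 : ℝ) t,
            |∫ y : ℝ, cauchyKer (t - s) (x - y) * (v s y * g y)| := abs_integral_le_integral_abs
      _ ≤ ∫ s in Set.Ioo (0 : ℝ) t,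
            (A * N * V * T ^ (1 / 2 + κ)) * ((t - s) ^ (-a) * s ^ (-b)) :=
          setIntegral_mono_on (hInt x).abs (hDi.const_mul _) measurableSet_Ioo (hb1 x)
      _ ≤ _ := by
          rw [integral_const_mul]
          exact mul_le_mul_of_nonneg_left hDb (by positivity)
  have f2 : |(∫ s in Set.Ioo (0 : ℝ) t, ∫ y : ℝ, cauchyKer (t - s) (x' - y) * (v s y * g y)) -
        ∫ s in Set.Ioo (0 : ℝ) t, ∫ y : ℝ, cauchyKer (t - s) (y' - y) * (v s y * g y)| ≤
      (A * N * V * 2 * |x' - y'| ^ (1 / 2 + κ)) * (K * t ^ (1 - a - b)) := by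
    rw [← integral_sub (hInt x') (hInt y')]
    calc _ ≤ ∫ s in Set.Ioo (0 : ℝ) t,
            |(∫ y : ℝ, cauchyKer (t - s) (x' - y) * (v s y * g y)) -
              ∫ y : ℝ, cauchyKer (t - s) (y' - y) * (v s y * g y)| :=
          abs_integral_le_integral_abs
      _ ≤ ∫ s in Set.Ioo (0 : ℝ) t,
            (A * N * V * 2 * |x' - y'| ^ (1 / 2 + κ)) * ((t - s) ^ (-a) * s ^ (-b)) :=
          setIntegral_mono_on ((hInt x').sub (hInt y')).abs (hDi.const_mul _)
            measurableSet_Ioo (hb2 x' y')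
      _ ≤ _ := by
          rw [integral_const_mul]
          exact mul_le_mul_of_nonneg_left hDb (by positivity)
  have f3 : |(∫ s in Set.Ioo (0 : ℝ) t, ∫ y : ℝ, cauchyKer (t - s) (x' - y) * (v s y * g y)) -
        ∫ s in Set.Ioo (0 : ℝ) t, ∫ y : ℝ, cauchyKer (t - s) (y' - y) * (v s y * g y)| /
        |x' - y'| ^ (1 / 2 + κ) ≤ A * N * V * 2 * (K * t ^ (1 - a - b)) := by
    rw [div_le_iff₀ hd]
    refine f2.trans (le_of_eq ?_)
    ring
  have hK0 : 0 ≤ K := by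
    have h1 : 0 < 1 - a := by linarith
    have h2 : 0 < 1 - b := by linarith
    positivity
  have ep : t ^ b * t ^ (1 - a - b) = t ^ (1 / 2 - 2 * κ) := by
    rw [← Real.rpow_add ht0]; congr 1; rw [ha, hb]; ring
  have hpT : t ^ (1 / 2 - 2 * κ) ≤ T ^ (1 / 2 - 2 * κ) :=
    Real.rpow_le_rpow ht0.le htT (by linarith)
  have htb : 0 ≤ t ^ b := by positivity
  calc _ ≤ t ^ b * ((A * N * V * T ^ (1 / 2 + κ)) * (K * t ^ (1 - a - b)) +
          A * N * V * 2 * (K * t ^ (1 - a - b))) :=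
        mul_le_mul_of_nonneg_left (add_le_add f1 f3) htb
    _ = A * (T ^ (1 / 2 + κ) + 2) * K * N * (t ^ b * t ^ (1 - a - b)) * V := by ring
    _ ≤ _ := by
        rw [ep]
        gcongr
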